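/- Fix n ≥ 1 and times 0 < T_1 < … < T_n with k_{j-1}(T_j,T_j) > 0 for j = 1,…,n, suppose Assumptions A and GD hold, and assume k̄_n(1,1) > 0, where k̄_n(t,s) = k̄(t,s) − Σ_{ℓ=1}^{n} k_{ℓ-1}(T_ℓ,T_ℓ) ᾱ_ℓ(t) ᾱ_ℓ(s). Then, as ε → 0⁺, the covariance of the bridge process, namely [k_n(T_n+εt,T_n+εs) − k_n(T_n+εt,T_n+ε)·k_n(T_n+ε,T_n+εs)/k_n(T_n+ε,T_n+ε)]/γ_ε², converges uniformly for (t,s) ∈ [0,1]² to k̄_Y(t,s) = k̄_n(t,s) − k̄_n(t,1)·k̄_n(s,1)/k̄_n(1,1). -/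

import Mathlib

open MeasureTheory Filter Topology Set

noncomputable def condCov (k : ℝ → ℝ → ℝ) (T : ℕ → ℝ) : ℕ → ℝ → ℝ → ℝ
  | 0 => k
  | j + 1 => fun t s =>
      condCov k T j t s -
        condCov k T j t (T (j + 1)) / condCov k T j (T (j + 1)) (T (j + 1)) *
          condCov k T j s (T (j + 1))

noncomputable def condRec (k : ℝ → ℝ → ℝ) (T : ℕ → ℝ) (f : ℝ → ℝ → ℝ) : ℕ → ℝ → ℝ → ℝ
  | 0 => f
  | j + 1 => fun t S =>
      condRec k T f j t S -
        condCov k T j S (T (j + 1)) / condCov k T j (T (j + 1)) (T (j + 1)) *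
          condRec k T f j t (T (j + 1))

noncomputable def kbarN (k : ℝ → ℝ → ℝ) (T : ℕ → ℝ) (ρ : ℝ → ℝ → ℝ) (kbar : ℝ → ℝ → ℝ)
    (n : ℕ) (t s : ℝ) : ℝ :=
  kbar t s - ∑ ℓ ∈ Finset.range n, condCov k T ℓ (T (ℓ + 1)) (T (ℓ + 1)) *
    (condRec k T ρ ℓ t (T (ℓ + 1)) / condCov k T ℓ (T (ℓ + 1)) (T (ℓ + 1))) *
    (condRec k T ρ ℓ s (T (ℓ + 1)) / condCov k T ℓ (T (ℓ + 1)) (T (ℓ + 1)))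

/-!
Conditioning on the value at one time takes a Schur complement of the covariance, an operation that
is continuous and homogeneous in the kernel. Each of the `n` conditionings changes the rescaled
covariance of the increments after `T_n` by a product of rescaled increments, so this covariance
converges to `k̄_n`. After the last conditioning the process is deterministic at `T_n`, so the
covariance of its increments is its covariance, and conditioning once more, at `T_n + ε`, commutes
with the limit.

Products of uniform limits need bounded factors. On compact sets with continuous limits, uniform
convergence is the same as continuous convergence, `F i y → f x` as `i → ∞` and `y → x`, which is
compatible with every continuous operation.
-/

section ContinuousConvergence

variable {ι X Y Z : Type*} [TopologicalSpace X] {l : Filter ι} {s : Set X}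

/-- Continuous convergence (in the sense of Carathéodory) of `F` to `f` on `s` along `l`. With
`l` nontrivial and `s` compact, it is uniform convergence on `s` to a continuous limit. -/
def TendstoContinuouslyOn [TopologicalSpace Y] (F : ι → X → Y) (f : X → Y) (l : Filter ι)
    (s : Set X) : Prop :=
  ∀ x ∈ s, Tendsto (fun q : ι × X => F q.1 q.2) (l ×ˢ 𝓝[s] x) (𝓝 (f x))

namespace TendstoContinuouslyOn

section Topological

variable [TopologicalSpace Y] {F : ι → X → Y} {f : X → Y}

lemma tendsto_at (h : TendstoContinuouslyOn F f l s) {x : X} (hx : x ∈ s) :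
    Tendsto (fun i => F i x) l (𝓝 (f x)) :=
  (h x hx).comp (tendsto_id.prodMk (tendsto_const_pure.mono_right (pure_le_nhdsWithin hx)))

lemma continuousOn [RegularSpace Y] [l.NeBot] (h : TendstoContinuouslyOn F f l s) :
    ContinuousOn f s := by
  intro x hx
  refine (closed_nhds_basis (f x)).tendsto_right_iff.2 fun V ⟨hV, hVclosed⟩ => ?_
  have hFV : ∀ᶠ y in 𝓝[s] x, ∀ᶠ i in l, F i y ∈ V :=
    (eventually_swap_iff.1 ((h x hx).eventually_mem hV)).curry
  filter_upwards [hFV, self_mem_nhdsWithin] with y hyV hys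
  exact hVclosed.mem_of_tendsto (h.tendsto_at hys) hyV

lemma comp [TopologicalSpace Z] (h : TendstoContinuouslyOn F f l s) {g : Z → X} {t : Set Z}
    (hg : ContinuousOn g t) (hgs : MapsTo g t s) :
    TendstoContinuouslyOn (fun i z => F i (g z)) (fun z => f (g z)) l t := fun z hz =>
  (h _ (hgs hz)).comp (tendsto_id.prodMap ((hg z hz).tendsto_nhdsWithin hgs))

end Topological

variable [UniformSpace Y] {F : ι → X → Y} {f : X → Y}

lemma of_tendstoUniformlyOn [l.NeBot] (h : TendstoUniformlyOn F f l s)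
    (hF : ∀ᶠ i in l, ContinuousOn (F i) s) : TendstoContinuouslyOn F f l s := by
  intro x hx
  have hlift : TendstoUniformlyOn (fun q : ι × X => F q.1) f (l ×ˢ 𝓝[s] x) s :=
    fun u hu => tendsto_fst.eventually (h u hu)
  exact hlift.tendsto_comp (h.continuousOn hF.frequently x hx) tendsto_snd

lemma tendstoLocallyUniformlyOn [l.NeBot] (h : TendstoContinuouslyOn F f l s) :
    TendstoLocallyUniformlyOn F f l s := by
  refine tendstoLocallyUniformlyOn_iff_forall_tendsto.2 fun x hx => ?_
  have hf : Tendsto (fun q : ι × X => f q.2) (l ×ˢ 𝓝[s] x) (𝓝 (f x)) :=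
    (h.continuousOn x hx).tendsto.comp tendsto_snd
  exact (hf.prodMk_nhds (h x hx)).mono_right (nhds_le_uniformity (f x))

lemma tendstoUniformlyOn [l.NeBot] (h : TendstoContinuouslyOn F f l s) (hs : IsCompact s) :
    TendstoUniformlyOn F f l s :=
  (tendstoLocallyUniformlyOn_iff_tendstoUniformlyOn_of_compact hs).1 h.tendstoLocallyUniformlyOn

end TendstoContinuouslyOn

end ContinuousConvergence

section Pinning

variable {E 𝕜 : Type*} [Field 𝕜]

/-- The covariance of a process with covariance `K` conditioned on its value at time `S`. As in
`condCov`, the second factor is `K s S` and not `K S s`. -/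
def pinnedCov (K : E → E → 𝕜) (S t s : E) : 𝕜 :=
  K t s - K t S * K s S / K S S

lemma pinnedCov_self_right {K : E → E → 𝕜} {S : E} (hS : K S S ≠ 0) (t : E) :
    pinnedCov K S t S = 0 := by
  rw [pinnedCov, mul_div_cancel_right₀ _ hS, sub_self]

lemma pinnedCov_comm {K : E → E → 𝕜} (hK : ∀ t s, K t s = K s t) (S t s : E) :
    pinnedCov K S t s = pinnedCov K S s t := by
  rw [pinnedCov, pinnedCov, hK t s, mul_comm (K t S)]

lemma pinnedCov_div_const (K : E → E → 𝕜) {c : 𝕜} (hc : c ≠ 0) (S t s : E) :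
    pinnedCov (fun x y => K x y / c) S t s = pinnedCov K S t s / c := by
  simp only [pinnedCov]
  rw [mul_div_assoc, div_div_div_cancel_right₀ hc]
  ring

lemma TendstoContinuouslyOn.pinnedCov [TopologicalSpace 𝕜] [IsTopologicalDivisionRing 𝕜]
    [TopologicalSpace E] {ι : Type*} {l : Filter ι} {D : Set E} {K : ι → E → E → 𝕜}
    {κ : E → E → 𝕜} {S : E}
    (h : TendstoContinuouslyOn (fun i (p : E × E) => K i p.1 p.2) (fun p => κ p.1 p.2) l (D ×ˢ D))
    (hS : S ∈ D) (hκ : κ S S ≠ 0) :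
    TendstoContinuouslyOn (fun i (p : E × E) => pinnedCov (K i) S p.1 p.2)
      (fun p => pinnedCov κ S p.1 p.2) l (D ×ˢ D) := by
  have hfst : TendstoContinuouslyOn (fun i (p : E × E) => K i p.1 S) (fun p => κ p.1 S) l
      (D ×ˢ D) := h.comp (g := fun p : E × E => (p.1, S)) (by fun_prop) fun _ hp => ⟨hp.1, hS⟩
  have hsnd : TendstoContinuouslyOn (fun i (p : E × E) => K i p.2 S) (fun p => κ p.2 S) l
      (D ×ˢ D) := h.comp (g := fun p : E × E => (p.2, S)) (by fun_prop) fun _ hp => ⟨hp.2, hS⟩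
  have hvar : TendstoContinuouslyOn (fun i (_ : E × E) => K i S S) (fun _ => κ S S) l
      (D ×ˢ D) := h.comp (g := fun _ => (S, S)) (by fun_prop) fun _ _ => ⟨hS, hS⟩
  exact fun p hp => (h p hp).sub (((hfst p hp).mul (hsnd p hp)).div (hvar p hp) hκ)

end Pinning

section Increments

variable {E : Type*}

/-- The covariance of the increments `X x - X a` and `X y - X a` of a process `X` with
covariance `K`. -/
def incrementCov {G : Type*} [AddGroup G] (K : E → E → G) (a x y : E) : G :=
  K x y - K x a - K a y + K a a

lemma incrementCov_eq_self {G : Type*} [AddGroup G] {K : E → E → G} {a : E}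
    (hleft : ∀ t, K a t = 0) (hright : ∀ t, K t a = 0) (x y : E) :
    incrementCov K a x y = K x y := by
  simp only [incrementCov, hleft, hright, sub_zero, add_zero]

lemma incrementCov_pinnedCov {𝕜 : Type*} [Field 𝕜] (K : E → E → 𝕜) (S a x y : E) :
    incrementCov (pinnedCov K S) a x y =
      incrementCov K a x y - (K x S - K a S) * (K y S - K a S) / K S S := by
  simp only [incrementCov, pinnedCov]
  ring

lemma continuousOn_incrementCov {G : Type*} [AddGroup G] [TopologicalSpace G]
    [IsTopologicalAddGroup G] [TopologicalSpace E] {K : E → E → G} {a : E} {D : Set E}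
    (hK : ContinuousOn (fun p : E × E => K p.1 p.2) (D ×ˢ D)) (ha : a ∈ D) :
    ContinuousOn (fun p : E × E => incrementCov K a p.1 p.2) (D ×ˢ D) := by
  have hfst : ContinuousOn (fun p : E × E => K p.1 a) (D ×ˢ D) :=
    hK.comp (g := fun p : E × E => K p.1 p.2) (f := fun p : E × E => (p.1, a)) (by fun_prop)
      fun _ hp => ⟨hp.1, ha⟩
  have hsnd : ContinuousOn (fun p : E × E => K a p.2) (D ×ˢ D) :=
    hK.comp (g := fun p : E × E => K p.1 p.2) (f := fun p : E × E => (a, p.2)) (by fun_prop)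
      fun _ hp => ⟨ha, hp.2⟩
  exact ((hK.sub hfst).sub hsnd).add continuousOn_const

end Increments

section IteratedConditioning

variable {k : ℝ → ℝ → ℝ} {T : ℕ → ℝ} {ρ kbar : ℝ → ℝ → ℝ} {j : ℕ}

lemma condCov_succ (k : ℝ → ℝ → ℝ) (T : ℕ → ℝ) (j : ℕ) :
    condCov k T (j + 1) = pinnedCov (condCov k T j) (T (j + 1)) := by
  ext t s
  simp only [condCov, pinnedCov, div_mul_eq_mul_div]

lemma condCov_comm (hk : ∀ t s, k t s = k s t) (j : ℕ) (t s : ℝ) :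
    condCov k T j t s = condCov k T j s t := by
  induction j generalizing t s with
  | zero => exact hk t s
  | succ j ih => simpa only [condCov_succ] using pinnedCov_comm ih _ t s

lemma kbarN_zero (k : ℝ → ℝ → ℝ) (T : ℕ → ℝ) (ρ kbar : ℝ → ℝ → ℝ) : kbarN k T ρ kbar 0 = kbar := by
  ext t s
  simp only [kbarN, Finset.range_zero, Finset.sum_empty, sub_zero]

lemma kbarN_succ (k : ℝ → ℝ → ℝ) (T : ℕ → ℝ) (ρ kbar : ℝ → ℝ → ℝ) (j : ℕ) (t s : ℝ) :
    kbarN k T ρ kbar (j + 1) t s = kbarN k T ρ kbar j t s -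
      condRec k T ρ j t (T (j + 1)) * condRec k T ρ j s (T (j + 1)) /
        condCov k T j (T (j + 1)) (T (j + 1)) := by
  simp only [kbarN, Finset.sum_range_succ]
  field

variable {ι : Type*} {l : Filter ι} {φ : ι → ℝ → ℝ} {γ : ι → ℝ} {a : ℝ} {I : Set ℝ}

lemma tendstoContinuouslyOn_condCov_increment {S : ℝ}
    (hT : ∀ i < j, TendstoContinuouslyOn
      (fun ε t => (k (φ ε t) (T (i + 1)) - k a (T (i + 1))) / γ ε) (fun t => ρ t (T (i + 1))) l I)
    (hS : TendstoContinuouslyOn (fun ε t => (k (φ ε t) S - k a S) / γ ε) (fun t => ρ t S) l I) :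
    TendstoContinuouslyOn (fun ε t => (condCov k T j (φ ε t) S - condCov k T j a S) / γ ε)
      (fun t => condRec k T ρ j t S) l I := by
  induction j generalizing S with
  | zero => exact hS
  | succ j ih =>
    have hT' := fun i (hi : i < j) => hT i (hi.trans j.lt_succ_self)
    have hincS := ih hT' hS
    have hincT := ih hT' (hT j j.lt_succ_self)
    refine fun t ht => ((hincS t ht).sub ((hincT t ht).const_mul _)).congr fun q => ?_
    simp only [condCov]
    ring

lemma tendstoContinuouslyOn_incrementCov_condCov
    (hT : ∀ i < j, TendstoContinuouslyOn
      (fun ε t => (k (φ ε t) (T (i + 1)) - k a (T (i + 1))) / γ ε) (fun t => ρ t (T (i + 1))) l I)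
    (hk : TendstoContinuouslyOn
      (fun ε (p : ℝ × ℝ) => incrementCov k a (φ ε p.1) (φ ε p.2) / γ ε ^ 2)
      (fun p => kbar p.1 p.2) l (I ×ˢ I)) :
    TendstoContinuouslyOn
      (fun ε (p : ℝ × ℝ) => incrementCov (condCov k T j) a (φ ε p.1) (φ ε p.2) / γ ε ^ 2)
      (fun p => kbarN k T ρ kbar j p.1 p.2) l (I ×ˢ I) := by
  induction j with
  | zero => simpa only [kbarN_zero, condCov] using hk
  | succ j ih =>
    have hT' := fun i (hi : i < j) => hT i (hi.trans j.lt_succ_self)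
    have hinc := tendstoContinuouslyOn_condCov_increment hT' (hT j j.lt_succ_self)
    have hfst := hinc.comp continuousOn_fst fun (p : ℝ × ℝ) (hp : p ∈ I ×ˢ I) => hp.1
    have hsnd := hinc.comp continuousOn_snd fun (p : ℝ × ℝ) (hp : p ∈ I ×ˢ I) => hp.2
    intro p hp
    simp only [kbarN_succ, condCov_succ, incrementCov_pinnedCov]
    refine ((ih hT' p hp).sub (((hfst p hp).mul (hsnd p hp)).div_const _)).congr fun q => ?_
    ring

end IteratedConditioning

section Rescaling

variable {k : ℝ → ℝ → ℝ} {γ : ℝ → ℝ} {a : ℝ}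

lemma mapsTo_add_mul_Icc_Ici (ha : 0 ≤ a) {ε : ℝ} (hε : 0 ≤ ε) :
    MapsTo (fun t => a + ε * t) (Icc 0 1) (Ici 0) :=
  fun _ ht => add_nonneg ha (mul_nonneg hε ht.1)

lemma tendstoContinuouslyOn_rescaled_increment
    (hk : ContinuousOn (fun p : ℝ × ℝ => k p.1 p.2) (Ici 0 ×ˢ Ici 0)) (ha : 0 ≤ a) {S : ℝ}
    (hS : 0 ≤ S) {r : ℝ → ℝ}
    (h : TendstoUniformlyOn (fun ε t => (k (a + ε * t) S - k a S) / γ ε) r (𝓝[>] (0 : ℝ))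
      (Icc 0 1)) :
    TendstoContinuouslyOn (fun ε t => (k (a + ε * t) S - k a S) / γ ε) r (𝓝[>] (0 : ℝ))
      (Icc 0 1) := by
  refine .of_tendstoUniformlyOn h ?_
  filter_upwards [self_mem_nhdsWithin] with ε hε
  have hkS : ContinuousOn (fun t => k t S) (Ici 0) := hk.uncurry_right S hS
  exact ((hkS.comp (by fun_prop) (mapsTo_add_mul_Icc_Ici ha (le_of_lt hε))).sub
    continuousOn_const).div_const _

lemma tendstoContinuouslyOn_rescaled_incrementCov
    (hk : ContinuousOn (fun p : ℝ × ℝ => k p.1 p.2) (Ici 0 ×ˢ Ici 0)) (ha : 0 ≤ a)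
    {κ : ℝ × ℝ → ℝ}
    (h : TendstoUniformlyOn
      (fun ε (p : ℝ × ℝ) => incrementCov k a (a + ε * p.1) (a + ε * p.2) / γ ε ^ 2) κ
      (𝓝[>] (0 : ℝ)) (Icc 0 1 ×ˢ Icc 0 1)) :
    TendstoContinuouslyOn
      (fun ε (p : ℝ × ℝ) => incrementCov k a (a + ε * p.1) (a + ε * p.2) / γ ε ^ 2) κ
      (𝓝[>] (0 : ℝ)) (Icc 0 1 ×ˢ Icc 0 1) := by
  refine .of_tendstoUniformlyOn h ?_
  filter_upwards [self_mem_nhdsWithin] with ε hε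
  have hmaps := mapsTo_add_mul_Icc_Ici ha (le_of_lt hε)
  exact ((continuousOn_incrementCov hk ha).comp (by fun_prop) (hmaps.prodMap hmaps)).div_const _

end Rescaling

theorem bridge_covariance_convergence_general
    (k : ℝ → ℝ → ℝ) (T : ℕ → ℝ) (n : ℕ) (γ : ℝ → ℝ) (ρ : ℝ → ℝ → ℝ) (kbar : ℝ → ℝ → ℝ)
    (hn : 1 ≤ n)
    (hkcont : ContinuousOn (fun p : ℝ × ℝ => k p.1 p.2) (Ici 0 ×ˢ Ici 0))
    (hksymm : ∀ t s, k t s = k s t)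
    (hT : ∀ j < n, 0 ≤ T (j + 1))
    (hγ : ∀ ε : ℝ, 0 < ε → γ ε ≠ 0)
    (hne : ∀ j < n, condCov k T j (T (j + 1)) (T (j + 1)) ≠ 0)
    (hA : ∀ j < n, TendstoUniformlyOn
        (fun ε t => (k (T n + ε * t) (T (j + 1)) - k (T n) (T (j + 1))) / γ ε)
        (fun t => ρ t (T (j + 1))) (𝓝[>] (0 : ℝ)) (Icc 0 1))
    (hGD : TendstoUniformlyOn
        (fun ε (p : ℝ × ℝ) => incrementCov k (T n) (T n + ε * p.1) (T n + ε * p.2) / γ ε ^ 2)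
        (fun p => kbar p.1 p.2) (𝓝[>] (0 : ℝ)) (Icc 0 1 ×ˢ Icc 0 1))
    (hk11 : kbarN k T ρ kbar n 1 1 ≠ 0) :
    TendstoUniformlyOn
      (fun ε (p : ℝ × ℝ) =>
        pinnedCov (condCov k T n) (T n + ε) (T n + ε * p.1) (T n + ε * p.2) / γ ε ^ 2)
      (fun p => pinnedCov (kbarN k T ρ kbar n) 1 p.1 p.2)
      (𝓝[>] (0 : ℝ)) (Icc 0 1 ×ˢ Icc 0 1) := by
  obtain ⟨m, rfl⟩ := Nat.exists_eq_add_of_le' hn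
  have ha := hT m m.lt_succ_self
  have hdet (t : ℝ) : condCov k T (m + 1) t (T (m + 1)) = 0 := by
    rw [condCov_succ, pinnedCov_self_right (hne m m.lt_succ_self)]
  have hdet' (t : ℝ) : condCov k T (m + 1) (T (m + 1)) t = 0 := by
    rw [condCov_comm hksymm, hdet]
  have hcov := tendstoContinuouslyOn_incrementCov_condCov
    (fun j hj => tendstoContinuouslyOn_rescaled_increment hkcont ha (hT j hj) (hA j hj))
    (tendstoContinuouslyOn_rescaled_incrementCov hkcont ha hGD)
  simp only [incrementCov_eq_self hdet' hdet] at hcov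
  have hpinned := (hcov.pinnedCov
    (K := fun ε t s => condCov k T (m + 1) (T (m + 1) + ε * t) (T (m + 1) + ε * s) / γ ε ^ 2)
    (right_mem_Icc.2 zero_le_one) hk11).tendstoUniformlyOn
    (isCompact_Icc.prod isCompact_Icc)
  refine hpinned.congr ?_
  filter_upwards [self_mem_nhdsWithin] with ε hε p _
  refine (pinnedCov_div_const _ (pow_ne_zero 2 (hγ ε hε)) 1 p.1 p.2).trans ?_
  simp only [pinnedCov, mul_one]

/-- Under Assumptions A and GD, if `k̄_n(1,1) > 0` then the covariance of the bridge of the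
`n`-fold conditional process, rescaled by `γ_ε²`, converges uniformly on `[0,1]²` to
`k̄_Y(t,s) = k̄_n(t,s) − k̄_n(t,1) k̄_n(s,1) / k̄_n(1,1)`. -/
theorem bridge_covariance_convergence
    (k : ℝ → ℝ → ℝ) (T : ℕ → ℝ) (n : ℕ) (γ : ℝ → ℝ) (ρ : ℝ → ℝ → ℝ) (kbar : ℝ → ℝ → ℝ)
    (hn : 1 ≤ n)
    (hkcont : ContinuousOn (fun p : ℝ × ℝ => k p.1 p.2) (Ici 0 ×ˢ Ici 0))
    (hksymm : ∀ t s, k t s = k s t)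
    (hT1 : 0 < T 1)
    (hTmono : ∀ j, 1 ≤ j → j + 1 ≤ n → T j < T (j + 1))
    (hγpos : ∀ ε : ℝ, 0 < ε → 0 < γ ε)
    (hγ0 : Tendsto γ (𝓝[>] (0:ℝ)) (𝓝 0))
    (hpos : ∀ j < n, 0 < condCov k T j (T (j + 1)) (T (j + 1)))
    (hA : ∀ T' : ℝ, 0 < T' → TendstoUniformlyOn
        (fun ε t => (k (T n + ε * t) T' - k (T n) T') / γ ε)
        (fun t => ρ t T') (𝓝[>] (0:ℝ)) (Icc 0 1))
    (hGD : TendstoUniformlyOn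
        (fun ε (p : ℝ × ℝ) =>
          (k (T n + ε * p.1) (T n + ε * p.2) - k (T n + ε * p.1) (T n) -
            k (T n) (T n + ε * p.2) + k (T n) (T n)) / (γ ε) ^ 2)
        (fun p => kbar p.1 p.2) (𝓝[>] (0:ℝ)) (Icc 0 1 ×ˢ Icc 0 1))
    (hk11 : 0 < kbarN k T ρ kbar n 1 1) :
    TendstoUniformlyOn
      (fun ε (p : ℝ × ℝ) =>
        (condCov k T n (T n + ε * p.1) (T n + ε * p.2) -
          condCov k T n (T n + ε * p.1) (T n + ε) *
            condCov k T n (T n + ε) (T n + ε * p.2) /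
              condCov k T n (T n + ε) (T n + ε)) / (γ ε) ^ 2)
      (fun p => kbarN k T ρ kbar n p.1 p.2 -
        kbarN k T ρ kbar n p.1 1 * kbarN k T ρ kbar n p.2 1 / kbarN k T ρ kbar n 1 1)
      (𝓝[>] (0:ℝ)) (Icc 0 1 ×ˢ Icc 0 1) := by
  have hT : StrictMonoOn T (Icc 1 n) :=
    strictMonoOn_of_lt_add_one ordConnected_Icc fun j _ hj hj' => hTmono j hj.1 hj'.2
  have hTpos (j : ℕ) (hj : j < n) : 0 < T (j + 1) :=
    hT1.trans_le (hT.monotoneOn ⟨le_rfl, hn⟩ ⟨by omega, hj⟩ (by omega))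
  have hlim := bridge_covariance_convergence_general k T n γ ρ kbar hn hkcont hksymm
    (fun j hj => (hTpos j hj).le) (fun ε hε => (hγpos ε hε).ne') (fun j hj => (hpos j hj).ne')
    (fun j hj => hA _ (hTpos j hj)) hGD hk11.ne'
  refine hlim.congr (.of_forall fun ε p _ => ?_)
  simp only [pinnedCov]
  rw [condCov_comm hksymm n (T n + ε * p.2)]
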